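/- Let C be the cycle of length n ≥ 3 on [n] and I_C its binomial edge ideal. Then the Hilbert series of S/I_C is H(S/I_C, t) = ((1+t)^{n−1} − t^2(1+t)^{n−1} + (n−1)t^n + t^{n+1}) / (1−t)^{n+1}. In particular, the multiplicity of S/I_C equals n. -/

import Mathlib

/-!
The ideal `I_C` is generated by differences of monomials, so `S/I_C` has a `K`-basis consisting of
the classes of monomials under the equivalence relation generated by the steps
`w · y_i x_{i+1} ⟶ w · x_i y_{i+1}` (indices cyclic), and the Hilbert function counts classes
(`finrank_image_eq_ncard`).

The steps have the diamond property (`step_confluent`), so by Church-Rosser a class contains at most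
one normal form, i.e. at most one monomial divisible by no `y_i x_{i+1}`. If some vertex `z` does not
occur in a monomial, the cycle is effectively cut at `z`, rewriting terminates, and the class has
exactly one normal form (`ncard_nonfull_classes`). If all vertices occur, the class is determined by
the multidegree and the total `x`-degree (`mk_eq_of_full`), which gives `m + 1` classes for each
positive multidegree of sum `m`, whereas only two normal forms have that multidegree
(`ncard_full_NF`).

With `G` and `F` the generating functions of all normal forms and of positive multidegrees, the
Hilbert series is thus `∑ (G_m + (m - 1) F_m) t^m = G + t F' - F`. The products `y_i x_{i+1}` live on
disjoint pairs of variables, hence `G = ((1 + t) / (1 - t)) ^ n` (`ncard_NF`), and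
`F = (t / (1 - t)) ^ n`, which yields the stated rational function.
-/

open MvPolynomial CategoryTheory Opposite

noncomputable section

namespace BEIPaper

/-- The `x_i` variable of the polynomial ring `K[x_1,…,x_n,y_1,…,y_n]`,
which we realize as `MvPolynomial (σ ⊕ σ) K`, where `Sum.inl i ↦ x_i` and
`Sum.inr i ↦ y_i`. -/
def xv (K : Type) [Field K] {σ : Type} (i : σ) : MvPolynomial (σ ⊕ σ) K :=
  X (Sum.inl i)

/-- The `y_i` variable. -/
def yv (K : Type) [Field K] {σ : Type} (i : σ) : MvPolynomial (σ ⊕ σ) K :=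
  X (Sum.inr i)

/-- The binomial edge ideal of a graph `G` on the vertex set `[n]`:
generated by the binomials `x_i y_j - x_j y_i` for edges `{i, j}` with `i < j`. -/
def bei (K : Type) [Field K] {n : ℕ} (G : SimpleGraph (Fin n)) :
    Ideal (MvPolynomial (Fin n ⊕ Fin n) K) :=
  Ideal.span {f | ∃ i j : Fin n, i < j ∧ G.Adj i j ∧
    f = xv K i * yv K j - xv K j * yv K i}

/-- The prime ideal `P_T(G)`: generated by `{x_i, y_i : i ∈ T}` together with the
binomial edge ideals of the complete graphs on the vertex sets of the connected
components of the induced subgraph of `G` on `[n] ∖ T` (equivalently, all binomials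
`x_i y_j - x_j y_i` where `i < j` lie outside `T` in the same connected component). -/
def PT (K : Type) [Field K] {n : ℕ} (G : SimpleGraph (Fin n)) (T : Set (Fin n)) :
    Ideal (MvPolynomial (Fin n ⊕ Fin n) K) :=
  Ideal.span ((xv K '' T) ∪ (yv K '' T) ∪
    {f | ∃ i j : Fin n, ∃ (hi : i ∈ Tᶜ) (hj : j ∈ Tᶜ), i < j ∧
      (G.induce Tᶜ).Reachable ⟨i, hi⟩ ⟨j, hj⟩ ∧
      f = xv K i * yv K j - xv K j * yv K i})

/-- `c(T)`: the number of connected components of the induced subgraph of `G`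
on `[n] ∖ T`. -/
def ncomp {n : ℕ} (G : SimpleGraph (Fin n)) (T : Set (Fin n)) : ℕ :=
  Nat.card (G.induce Tᶜ).ConnectedComponent

/-- The graded (irrelevant) maximal ideal of a polynomial ring, generated by
all the variables. -/
def mIdeal (K : Type) [Field K] (σ : Type) : Ideal (MvPolynomial σ K) :=
  Ideal.span (Set.range X)

/-- The depth of a module `M` with respect to an ideal `I`: the supremum of lengths
of `M`-regular sequences consisting of elements of `I`. -/
def depth {R : Type} [CommRing R] (I : Ideal R) (M : Type) [AddCommGroup M]
    [Module R M] : ℕ∞ :=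
  sSup {k : ℕ∞ | ∃ rs : List R, (rs.length : ℕ∞) = k ∧ (∀ r ∈ rs, r ∈ I) ∧
    RingTheory.Sequence.IsRegular M rs}

/-- The (Krull) dimension of a module: the Krull dimension of `R` modulo the
annihilator of `M`. -/
def mdim (R : Type) [CommRing R] (M : Type) [AddCommGroup M] [Module R M] :
    WithBot ℕ∞ :=
  ringKrullDim (R ⧸ Module.annihilator R M)

/-- `M` is a Cohen-Macaulay `R`-module of dimension `d` (depth and dimension both
being taken with respect to the given (maximal graded) ideal `I`). -/
def IsCMmodOfDim {R : Type} [CommRing R] (I : Ideal R) (M : Type) [AddCommGroup M]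
    [Module R M] (d : ℕ) : Prop :=
  (depth I M : WithBot ℕ∞) = mdim R M ∧ mdim R M = (d : ℕ∞)

/-- The quotient `S/J` of a polynomial ring `S` by an ideal `J` is a Cohen-Macaulay
ring: its depth with respect to the graded maximal ideal equals its Krull dimension. -/
def IsCMQuot (K : Type) [Field K] {σ : Type} (J : Ideal (MvPolynomial σ K)) : Prop :=
  (depth (mIdeal K σ) (MvPolynomial σ K ⧸ J) : WithBot ℕ∞) =
    ringKrullDim (MvPolynomial σ K ⧸ J)

/-- `S/I` is approximately Cohen-Macaulay: there is a homogeneous element `x` of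
positive degree in the irrelevant ideal of `R = S/I` (i.e. the image of a homogeneous
polynomial `f` of positive degree) such that `R/x^m R = S/(I + (f^m))` is a
Cohen-Macaulay ring of dimension `dim R - 1` for all `m ≥ 1`. -/
def IsACM (K : Type) [Field K] {σ : Type} (I : Ideal (MvPolynomial σ K)) : Prop :=
  ∃ (d : ℕ) (f : MvPolynomial σ K), 0 < d ∧ f.IsHomogeneous d ∧
    ∀ m : ℕ, 1 ≤ m →
      IsCMQuot K (I ⊔ Ideal.span {f ^ m}) ∧
      ringKrullDim (MvPolynomial σ K ⧸ (I ⊔ Ideal.span {f ^ m})) + 1 =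
        ringKrullDim (MvPolynomial σ K ⧸ I)

/-- The Hilbert series of `S/I` (for a homogeneous ideal `I`), as a power series
over `ℤ`: the `m`-th coefficient is the `K`-dimension of the degree-`m` graded
component of `S/I`, i.e. of the image of the space of degree-`m` homogeneous
polynomials in `S/I`. -/
def hseries (K : Type) [Field K] {σ : Type} (I : Ideal (MvPolynomial σ K)) :
    PowerSeries ℤ :=
  PowerSeries.mk fun m =>
    (Module.finrank K (Submodule.map (Ideal.Quotient.mkₐ K I).toLinearMap
      (homogeneousSubmodule σ K m)) : ℤ)

/-- The formal power series variable `t`. -/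
def t : PowerSeries ℤ := PowerSeries.X

/-- The equidimensional part `U_S(I)` of (a minimal primary decomposition of) `I`:
the intersection of the primary components `I(p)` over the associated primes `p`
with `dim S/p = dim S/I`.  Any such `p` is a minimal prime of `I`, so its primary
component is independent of the decomposition and equals the saturation
`{x | ∃ s ∉ p, s * x ∈ I}`. -/
def USideal {R : Type} [CommRing R] (I : Ideal R) : Ideal R :=
  sInf {J | ∃ p ∈ associatedPrimes R (R ⧸ I),
    ringKrullDim (R ⧸ p) = ringKrullDim (R ⧸ I) ∧
    J = Ideal.span {x | ∃ s ∉ p, s * x ∈ I}}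

/-- `Ext_S^j(S/I, S)`, as an object of `ModuleCat S`.  The `i`-th module of
deficiency of `S/I` is `ω^i(S/I) = Ext_S^{2n-i}(S/I, S)`, i.e. `extSI K I (2*n - i)`. -/
def extSI (K : Type) [Field K] {σ : Type} (I : Ideal (MvPolynomial σ K)) (j : ℕ) :
    ModuleCat (MvPolynomial σ K) :=
  ((Ext (MvPolynomial σ K) (ModuleCat (MvPolynomial σ K)) j).obj
      (op (ModuleCat.of (MvPolynomial σ K) (MvPolynomial σ K ⧸ I)))).obj
    (ModuleCat.of (MvPolynomial σ K) (MvPolynomial σ K))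

/-- The line (path) graph on `[n]` (with `[n]` realized as `Fin n`), with edges
`{i, i+1}` for `1 ≤ i ≤ n-1`. -/
def lineG (n : ℕ) : SimpleGraph (Fin n) :=
  SimpleGraph.fromRel (fun a b => (b : ℕ) = (a : ℕ) + 1)

/-- The cycle of length `n` on `[n]` (with `[n]` realized as `Fin n`), with edges
`{i, i+1}` for `1 ≤ i ≤ n-1` together with `{1, n}`. -/
def cycleG (n : ℕ) : SimpleGraph (Fin n) :=
  SimpleGraph.fromRel (fun a b =>
    (b : ℕ) = (a : ℕ) + 1 ∨ ((a : ℕ) = 0 ∧ (b : ℕ) = n - 1))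

/-- The binomial `g = x_1 y_n - x_n y_1`. -/
def gElt (K : Type) [Field K] {n : ℕ} (hn : 0 < n) : MvPolynomial (Fin n ⊕ Fin n) K :=
  xv K ⟨0, hn⟩ * yv K ⟨n - 1, by omega⟩ - xv K ⟨n - 1, by omega⟩ * yv K ⟨0, hn⟩

/-- The `i`-th generator `x_2 x_3 ⋯ x_i y_{i+1} ⋯ y_{n-1}` (for `i = 1, …, n-1`)
of the monomial ideal `M`; the product ranges over the labels `p = 2, …, n-1`
(`0`-indexed: `q = p - 1` with `1 ≤ q ≤ n-2`), taking `x_p` when `p ≤ i` and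
`y_p` when `p > i`. -/
def mgen (K : Type) [Field K] (n : ℕ) (i : ℕ) : MvPolynomial (Fin n ⊕ Fin n) K :=
  ∏ q ∈ Finset.univ.filter (fun q : Fin n => 0 < (q : ℕ) ∧ (q : ℕ) < n - 1),
    (if (q : ℕ) + 1 ≤ i then xv K q else yv K q)

/-- The monomial ideal
`M = (x_2 x_3 ⋯ x_{n-1}, x_2 x_3 ⋯ x_{n-2} y_{n-1}, …, x_2 y_3 ⋯ y_{n-1}, y_2 y_3 ⋯ y_{n-1})`. -/
def monoM (K : Type) [Field K] (n : ℕ) : Ideal (MvPolynomial (Fin n ⊕ Fin n) K) :=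
  Ideal.span {f | ∃ i : ℕ, 1 ≤ i ∧ i ≤ n - 1 ∧ f = mgen K n i}

/-- The degree of a vertex, as the cardinality of its neighbor set. -/
def deg {n : ℕ} (G : SimpleGraph (Fin n)) (v : Fin n) : ℕ :=
  Nat.card (G.neighborSet v)

/-- A tree is 3-star like if no vertex has degree `≥ 4`, and either there is at most
one vertex of degree `3`, or there are exactly two vertices of degree `3` and they
are joined by an edge. -/
def ThreeStarLike {n : ℕ} (G : SimpleGraph (Fin n)) : Prop :=
  (∀ v, deg G v ≤ 3) ∧
    ({v | deg G v = 3}.Subsingleton ∨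
      ∃ a b : Fin n, a ≠ b ∧ G.Adj a b ∧ {v | deg G v = 3} = {a, b})

/-- The graph `G′` on `[n+1]` obtained from a graph `G` on `[n]` by attaching the
new edge `{v, n+1}` at the vertex `v` of `G`. -/
def extendG {n : ℕ} (G : SimpleGraph (Fin n)) (v : Fin n) : SimpleGraph (Fin (n + 1)) :=
  SimpleGraph.fromRel (fun a b =>
    (∃ (ha : a ≠ Fin.last n) (hb : b ≠ Fin.last n),
      G.Adj (a.castPred ha) (b.castPred hb)) ∨
    (a = Fin.castSucc v ∧ b = Fin.last n))

/-- The inclusion `S = K[x_1,…,x_n,y_1,…,y_n] → S′ = K[x_1,…,x_{n+1},y_1,…,y_{n+1}]`. -/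
def liftS (K : Type) [Field K] (n : ℕ) :
    MvPolynomial (Fin n ⊕ Fin n) K →ₐ[K] MvPolynomial (Fin (n + 1) ⊕ Fin (n + 1)) K :=
  rename (Sum.map Fin.castSucc Fin.castSucc)

/-! ### A monomial basis of the quotient by a binomial ideal -/

/-- The `K`-linear map from the polynomial ring to the free module on the classes of monomials
modulo `st`, sending a monomial to its class. -/
def toQuot (K : Type) [Field K] {σ : Type} (st : (σ →₀ ℕ) → (σ →₀ ℕ) → Prop) :
    MvPolynomial σ K →ₗ[K] (Quot st →₀ K) :=
  (basisMonomials σ K).constr K fun u => Finsupp.single (Quot.mk st u) 1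

theorem toQuot_monomial (K : Type) [Field K] {σ : Type} (st : (σ →₀ ℕ) → (σ →₀ ℕ) → Prop)
    (u : σ →₀ ℕ) : toQuot K st (monomial u 1) = Finsupp.single (Quot.mk st u) 1 := by
  have h := (basisMonomials σ K).constr_basis K
    (fun u => Finsupp.single (Quot.mk st u) (1 : K)) u
  rwa [coe_basisMonomials] at h

/-- If `I` contains the differences of `st`-related monomials and is killed by the passage to classes
of monomials, then the classes are a basis of `S/I`, and those of the monomials of degree `m` are a
basis of its degree `m` part. -/
theorem finrank_image_eq_ncard (K : Type) [Field K] {σ : Type} [Finite σ]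
    (st : (σ →₀ ℕ) → (σ →₀ ℕ) → Prop) (I : Ideal (MvPolynomial σ K))
    (hI : ∀ u v, st u v → monomial u (1 : K) - monomial v 1 ∈ I)
    (hk : ∀ p ∈ I, toQuot K st p = 0) (m : ℕ) :
    Module.finrank K (Submodule.map (Ideal.Quotient.mkₐ K I).toLinearMap
      (homogeneousSubmodule σ K m)) =
    (Quot.mk st '' {u : σ →₀ ℕ | u.degree = m}).ncard := by
  -- the map on `S/I` induced by `toQuot`, and a left inverse `Θ` of it
  let Ψ : (MvPolynomial σ K ⧸ I.restrictScalars K) →ₗ[K] (Quot st →₀ K) :=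
    Submodule.liftQ (I.restrictScalars K) (toQuot K st) (fun p hp => hk p hp)
  let Ψ' : (MvPolynomial σ K ⧸ I) →ₗ[K] (Quot st →₀ K) := Ψ
  have hΨ : Ψ' ∘ₗ (Ideal.Quotient.mkₐ K I).toLinearMap = toQuot K st := rfl
  let Θ : (Quot st →₀ K) →ₗ[K] (MvPolynomial σ K ⧸ I) :=
    Finsupp.linearCombination K (Quot.lift (fun u => Ideal.Quotient.mkₐ K I (monomial u 1))
      (fun u v h => Ideal.Quotient.eq.mpr (hI u v h)))
  have hΘ : Θ ∘ₗ toQuot K st = (Ideal.Quotient.mkₐ K I).toLinearMap := by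
    apply (basisMonomials σ K).ext
    intro u
    simp [Θ, toQuot_monomial]
  have hinj : Function.Injective Ψ' := by
    apply Function.LeftInverse.injective (g := Θ)
    intro q
    obtain ⟨p, rfl⟩ := Ideal.Quotient.mkₐ_surjective K I q
    exact LinearMap.congr_fun hΘ p
  rw [(Submodule.equivMapOfInjective Ψ' hinj _).finrank_eq, ← Submodule.map_comp, hΨ,
    homogeneousSubmodule_eq_finsupp_supported, AddMonoidAlgebra.supported_eq_span_single,
    Submodule.map_span]
  have himg : (toQuot K st) '' ((fun u => AddMonoidAlgebra.single u (1 : K)) ''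
      {d : σ →₀ ℕ | d.degree = m}) =
      (fun q => Finsupp.single q (1 : K)) '' (Quot.mk st '' {u : σ →₀ ℕ | u.degree = m}) := by
    rw [Set.image_image, Set.image_image]
    refine Set.image_congr fun u _ => ?_
    rw [single_eq_monomial, toQuot_monomial]
  have hfin : {u : σ →₀ ℕ | u.degree = m}.Finite := Finsupp.finite_of_degree_eq m
  have := (hfin.image (Quot.mk st)).fintype
  rw [himg, ← Finsupp.supported_eq_span_single,
    LinearEquiv.finrank_eq (Finsupp.supportedEquivFinsupp _), Module.finrank_finsupp_self,
    ← Nat.card_eq_fintype_card, Nat.card_coe_set_eq]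

/-! ### Generating functions -/

/-- The `n`-th power of the generating function of weighted letters counts words of length `n` by
total weight. The letters are those satisfying `p`, and `Lt k` lists the ones of weight `k`. -/
theorem coeff_pow_eq_ncard {L : Type} (n : ℕ) (Lt : ℕ → Finset L) (w : L → ℕ) (p : L → Prop)
    (h : ∀ k l, l ∈ Lt k ↔ p l ∧ w l = k) (m : ℕ) :
    PowerSeries.coeff m ((PowerSeries.mk fun k => ((Lt k).card : ℤ)) ^ n) =
      ({f : Fin n → L | (∀ i, p (f i)) ∧ ∑ i, w (f i) = m}.ncard : ℤ) := by
  classical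
  have hs : {f : Fin n → L | (∀ i, p (f i)) ∧ ∑ i, w (f i) = m} =
      (((Finset.finsuppAntidiag Finset.univ m).biUnion
        (fun a : Fin n →₀ ℕ => Fintype.piFinset (fun i => Lt (a i))) : Finset (Fin n → L)) :
          Set (Fin n → L)) := by
    ext f
    simp only [Set.mem_ofPred_eq, Finset.coe_biUnion, Set.mem_iUnion, Finset.mem_coe,
      Fintype.mem_piFinset, h, Finset.mem_finsuppAntidiag, exists_prop]
    constructor
    · rintro ⟨hp, hm⟩
      exact ⟨Finsupp.equivFunOnFinite.symm (fun i => w (f i)), by simpa using hm,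
        fun i => ⟨hp i, by simp⟩⟩
    · rintro ⟨a, ⟨ha, -⟩, hf⟩
      exact ⟨fun i => (hf i).1, by rw [← ha]; exact Finset.sum_congr rfl fun i _ => (hf i).2⟩
  rw [hs, Set.ncard_coe_finset, Finset.card_biUnion]
  · rw [← Fin.prod_const, PowerSeries.coeff_prod]
    simp [Fintype.card_piFinset]
  · intro a _ b _ hab
    change Disjoint _ _
    rw [Finset.disjoint_left]
    intro f hf hg
    apply hab
    ext i
    have h1 := (h _ _).1 (Fintype.mem_piFinset.1 hf i)
    have h2 := (h _ _).1 (Fintype.mem_piFinset.1 hg i)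
    rw [← h1.2, h2.2]

/-- The generating function of `n`-tuples of pairs with one entry zero is `((1 + t) / (1 - t)) ^ n`. -/
theorem exists_pairSeries (n : ℕ) : ∃ G : PowerSeries ℤ,
    G * (1 - t) ^ n = (1 + t) ^ n ∧ ∀ m, PowerSeries.coeff m G =
      ({f : Fin n → ℕ × ℕ | (∀ i, (f i).1 = 0 ∨ (f i).2 = 0) ∧
        ∑ i, ((f i).1 + (f i).2) = m}.ncard : ℤ) := by
  refine ⟨_, ?_, fun m => coeff_pow_eq_ncard n (fun k => {(0, k), (k, 0)})
    (fun l => l.1 + l.2) (fun l => l.1 = 0 ∨ l.2 = 0) ?_ m⟩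
  · rw [← mul_pow]
    congr 1
    ext k
    rcases k with _ | _ | k <;>
      simp [t, mul_sub, PowerSeries.coeff_succ_mul_X, PowerSeries.coeff_one, PowerSeries.coeff_X]
  · rintro k ⟨a, b⟩
    simp only [Finset.mem_insert, Finset.mem_singleton, Prod.mk.injEq]
    omega

/-- The generating function of `n`-tuples of positive integers is `(t / (1 - t)) ^ n`. -/
theorem exists_posSeries (n : ℕ) : ∃ F : PowerSeries ℤ,
    F * (1 - t) ^ n = t ^ n ∧ ∀ m, PowerSeries.coeff m F =
      ({a : Fin n → ℕ | (∀ i, 0 < a i) ∧ ∑ i, a i = m}.ncard : ℤ) := by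
  refine ⟨_, ?_, fun m => coeff_pow_eq_ncard n (fun k => if k = 0 then ∅ else {k})
    (fun l => l) (fun l => 0 < l) ?_ m⟩
  · rw [← mul_pow]
    congr 1
    ext k
    rcases k with _ | _ | k <;>
      simp [t, mul_sub, PowerSeries.coeff_succ_mul_X, PowerSeries.coeff_X]
  · intro k l
    split_ifs with hk
    · simp; omega
    · simp; omega

/-- For `F = (t / (1 - t)) ^ n`, the series `t F' - F` has coefficients `(m - 1) F_m`; its numerator
over `(1 - t) ^ (n + 1)` comes from differentiating `F (1 - t) ^ n = t ^ n`. -/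
theorem posSeries_identity (n : ℕ) (F : PowerSeries ℤ) (hF : F * (1 - t) ^ n = t ^ n) :
    (t * PowerSeries.derivative ℤ F - F) * (1 - t) ^ (n + 1) =
      ((n : PowerSeries ℤ) - 1) * t ^ n + t ^ (n + 1) := by
  have h := congrArg (fun g => t * (1 - t) * PowerSeries.derivative ℤ g) hF
  have ht : PowerSeries.derivative ℤ t = 1 := PowerSeries.derivative_X
  simp only [Derivation.leibniz, Derivation.leibniz_pow, map_sub, Derivation.map_one_eq_zero,
    ht, smul_eq_mul, nsmul_eq_mul] at h
  rcases n with _ | n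
  · simp at h hF ⊢
    subst hF
    simp [sub_eq_add_neg, add_comm]
  · simp only [Nat.add_sub_cancel] at h
    have h' : t * (1 - t) ^ (n + 2) * PowerSeries.derivative ℤ F
        = (n + 1 : ℕ) * (t ^ (n + 1) * (1 - t) + t * (F * (1 - t) ^ (n + 1))) := by
      linear_combination h
    rw [hF] at h'
    linear_combination h' - (1 - t) * hF

/-! ### Rewriting monomials along the cycle -/

/-- Exponent vectors of monomials in `x_1, …, x_n, y_1, …, y_n`. -/
abbrev Mon (n : ℕ) : Type := Fin n ⊕ Fin n →₀ ℕ

/-- The cyclic successor on `Fin n`. -/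
def cs {n : ℕ} (hn : 3 ≤ n) (i : Fin n) : Fin n :=
  ⟨if (i : ℕ) + 1 < n then i + 1 else 0, by split <;> omega⟩

theorem cs_injective {n : ℕ} (hn : 3 ≤ n) : Function.Injective (cs hn) := by
  intro i j h
  simp only [cs, Fin.mk.injEq] at h
  ext
  split_ifs at h <;> omega

theorem cs_bijective {n : ℕ} (hn : 3 ≤ n) : Function.Bijective (cs hn) :=
  Finite.injective_iff_bijective.mp (cs_injective hn)

/-- The exponent vector of `y_i x_j`. -/
def before {n : ℕ} (i j : Fin n) : Mon n :=
  Finsupp.single (Sum.inr i) 1 + Finsupp.single (Sum.inl j) 1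

/-- One rewriting step `w · y_i x_{i+1} ⟶ w · x_i y_{i+1}` along an edge of the cycle, the index
`i + 1` being read cyclically. -/
def Step {n : ℕ} (hn : 3 ≤ n) (u v : Mon n) : Prop :=
  ∃ i w, u = w + before i (cs hn i) ∧ v = w + before (cs hn i) i

/-- The multidegree of a monomial, both `x_i` and `y_i` having degree `e_i`. -/
def tot {n : ℕ} (u : Mon n) (i : Fin n) : ℕ := u (Sum.inl i) + u (Sum.inr i)

/-- The total degree of a monomial in the variables `x_i`. -/
def xsum {n : ℕ} (u : Mon n) : ℕ := ∑ i, u (Sum.inl i)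

theorem degree_eq_sum_tot {n : ℕ} (u : Mon n) : u.degree = ∑ i, tot u i := by
  simp [Finsupp.degree_eq_sum, tot, Finset.sum_add_distrib]

theorem monomial_before (K : Type) [Field K] {n : ℕ} (w : Mon n) (i j : Fin n) :
    monomial (w + before i j) (1 : K) = monomial w 1 * (xv K j * yv K i) := by
  simp only [xv, yv, X, before, monomial_mul, mul_one, add_comm]

theorem cycleG_adj {n : ℕ} (hn : 3 ≤ n) (i j : Fin n) :
    (cycleG n).Adj i j ↔ (j = cs hn i ∨ i = cs hn j) := by
  simp only [cycleG, SimpleGraph.fromRel_adj, cs, Fin.ext_iff, ne_eq]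
  have := i.2
  have := j.2
  split_ifs <;> omega

/-- Steps are congruences modulo the binomial edge ideal of the cycle. -/
theorem step_mem (K : Type) [Field K] {n : ℕ} (hn : 3 ≤ n) (u v : Mon n) (h : Step hn u v) :
    monomial u (1 : K) - monomial v 1 ∈ bei K (cycleG n) := by
  obtain ⟨i, w, rfl, rfl⟩ := h
  rw [monomial_before, monomial_before, ← mul_sub]
  apply Ideal.mul_mem_left
  have hadj : (cycleG n).Adj i (cs hn i) := (cycleG_adj hn _ _).2 (Or.inl rfl)
  rcases lt_or_gt_of_ne hadj.ne with hlt | hlt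
  · rw [← neg_sub]
    exact neg_mem (Ideal.subset_span ⟨i, cs hn i, hlt, hadj, rfl⟩)
  · exact Ideal.subset_span ⟨cs hn i, i, hlt, hadj.symm, rfl⟩

/-- Each monomial multiple of a generator is a difference of two monomials in the same class. -/
theorem toQuot_bei (K : Type) [Field K] {n : ℕ} (hn : 3 ≤ n) :
    ∀ p ∈ bei K (cycleG n), toQuot K (Step hn) p = 0 := by
  intro p hp
  suffices h : ∀ q, toQuot K (Step hn) (q * p) = 0 by simpa using h 1
  refine Submodule.span_induction ?_ ?_ ?_ ?_ hp
  · rintro _ ⟨i, j, -, hadj, rfl⟩ q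
    suffices h : toQuot K (Step hn) ∘ₗ LinearMap.mulRight K
        (xv K i * yv K j - xv K j * yv K i) = 0 from LinearMap.congr_fun h q
    apply (basisMonomials _ K).ext
    intro w
    simp only [coe_basisMonomials, LinearMap.comp_apply, LinearMap.mulRight_apply, mul_sub,
      LinearMap.zero_apply, ← monomial_before, map_sub, toQuot_monomial]
    rw [sub_eq_zero]
    congr 1
    rcases (cycleG_adj hn _ _).1 hadj with rfl | rfl
    · exact (Quot.sound ⟨i, w, rfl, rfl⟩).symm
    · exact Quot.sound ⟨j, w, rfl, rfl⟩
  · simp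
  · intro a b _ _ ha hb q
    rw [mul_add, map_add, ha, hb, add_zero]
  · intro a b _ hb q
    rw [smul_eq_mul, ← mul_assoc, hb]

theorem Step.tot_eq {n : ℕ} {hn : 3 ≤ n} {u v : Mon n} (h : Step hn u v) : tot u = tot v := by
  obtain ⟨i, w, rfl, rfl⟩ := h
  ext j
  simp [tot, before, Finsupp.single_apply]
  omega

theorem Step.xsum_eq {n : ℕ} {hn : 3 ≤ n} {u v : Mon n} (h : Step hn u v) :
    xsum u = xsum v := by
  obtain ⟨i, w, rfl, rfl⟩ := h
  simp [xsum, before, Finsupp.single_apply, Finset.sum_add_distrib]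

/-- The diamond property. Steps at distinct `i`, `j` consume disjoint pairs of variables, so both can
be performed, in either order. -/
theorem step_confluent {n : ℕ} (hn : 3 ≤ n) (a b c : Mon n) (hb : Step hn a b)
    (hc : Step hn a c) : ∃ d, Relation.ReflGen (Step hn) b d ∧
      Relation.ReflTransGen (Step hn) c d := by
  obtain ⟨i, w, hw, rfl⟩ := hb
  obtain ⟨j, w', hw', rfl⟩ := hc
  by_cases hij : i = j
  · subst hij
    obtain rfl : w = w' := add_right_cancel (hw.symm.trans hw')
    exact ⟨_, .refl, .refl⟩
  · have hcs : cs hn i ≠ cs hn j := fun h => hij (cs_injective hn h)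
    -- the variables consumed by the second step survive the first one
    have hle : before j (cs hn j) ≤ w := by
      intro k
      have h := DFunLike.congr_fun (hw.symm.trans hw') k
      rcases k with k | k <;> simp [before, Finsupp.single_apply] at h ⊢ <;>
        split_ifs at h ⊢ <;> omega
    obtain ⟨w₀, rfl⟩ := exists_add_of_le hle
    have hw₀ : w' = w₀ + before i (cs hn i) := by
      apply add_right_cancel (b := before j (cs hn j))
      rw [← hw', hw]
      abel
    subst hw₀
    refine ⟨w₀ + before (cs hn j) j + before (cs hn i) i, .single ⟨j, w₀ + before (cs hn i) i, ?_, ?_⟩,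
      .single ⟨i, w₀ + before (cs hn j) j, ?_, ?_⟩⟩ <;> abel

/-- Normal forms for `Step`: no product `y_i x_{i+1}` divides the monomial. -/
def IsNF {n : ℕ} (hn : 3 ≤ n) (u : Mon n) : Prop :=
  ∀ i, u (Sum.inr i) = 0 ∨ u (Sum.inl (cs hn i)) = 0

theorem IsNF.not_step {n : ℕ} {hn : 3 ≤ n} {u v : Mon n} (hu : IsNF hn u) : ¬ Step hn u v := by
  rintro ⟨i, w, rfl, -⟩
  have := hu i
  simp [before] at this

/-- By Church-Rosser, equivalent normal forms are equal. -/
theorem IsNF.eq_of_mk_eq {n : ℕ} {hn : 3 ≤ n} {u v : Mon n} (hu : IsNF hn u) (hv : IsNF hn v)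
    (h : Quot.mk (Step hn) u = Quot.mk (Step hn) v) : u = v := by
  have heqv := Relation.equivalence_join_reflTransGen (step_confluent hn)
  have hj : Relation.Join (Relation.ReflTransGen (Step hn)) u v :=
    (heqv.eqvGen_iff).1 ((Quot.eqvGen_exact h).mono fun a b hab =>
      ⟨b, .single hab, .refl⟩)
  obtain ⟨c, huc, hvc⟩ := hj
  have key : ∀ {a : Mon n}, IsNF hn a → Relation.ReflTransGen (Step hn) a c → a = c := by
    intro a ha hac
    rcases Relation.ReflTransGen.cases_head hac with h | ⟨d, hd, -⟩
    · exact h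
    · exact (ha.not_step hd).elim
  rw [key hu huc, key hv hvc]

/-- Steps not entering the vertex `z` terminate, since they move the `x`'s towards `z` along the path
obtained by cutting the cycle just before `z`. Hence every class contains a monomial reduced with
respect to these steps. -/
theorem exists_reduced {n : ℕ} (hn : 3 ≤ n) (z : Fin n) (u : Mon n) :
    ∃ v, Quot.mk (Step hn) u = Quot.mk (Step hn) v ∧
      ∀ i, cs hn i ≠ z → v (Sum.inr i) = 0 ∨ v (Sum.inl (cs hn i)) = 0 := by
  -- the distance from `z` to `i` along the cycle
  let pos : Fin n → ℕ := fun i => if z ≤ i then (i : ℕ) - z else i + n - z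
  have hpos : ∀ i, cs hn i ≠ z → pos (cs hn i) = pos i + 1 := by
    intro i hi
    have := i.2
    have := z.2
    simp only [pos, cs, ne_eq, Fin.ext_iff, Fin.le_def] at hi ⊢
    split_ifs at hi ⊢ <;> omega
  let pot : Mon n → ℕ := fun u => ∑ i, u (Sum.inl i) * pos i
  induction hk : pot u using Nat.strong_induction_on generalizing u with
  | _ k ih =>
    by_cases hred : ∀ i, cs hn i ≠ z → u (Sum.inr i) = 0 ∨ u (Sum.inl (cs hn i)) = 0
    · exact ⟨u, rfl, hred⟩
    push Not at hred
    obtain ⟨i, hi, hy, hx⟩ := hred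
    have hle : before i (cs hn i) ≤ u := by
      intro k
      rcases k with k | k <;> simp [before, Finsupp.single_apply] <;>
        split_ifs <;> simp_all <;> omega
    obtain ⟨w, rfl⟩ := exists_add_of_le hle
    rw [add_comm] at hk ⊢
    have hlt : pot (w + before (cs hn i) i) < k := by
      rw [← hk]
      simp [pot, before, Finsupp.single_apply, add_mul, Finset.sum_add_distrib, hpos i hi]
    obtain ⟨v, hv, hv'⟩ := ih _ hlt _ rfl
    exact ⟨v, (Quot.sound ⟨i, w, rfl, rfl⟩).trans hv, hv'⟩

theorem tot_eq_of_mk_eq {n : ℕ} {hn : 3 ≤ n} {u v : Mon n}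
    (h : Quot.mk (Step hn) u = Quot.mk (Step hn) v) : tot u = tot v :=
  congrArg (Quot.lift tot fun _ _ h => h.tot_eq) h

theorem xsum_eq_of_mk_eq {n : ℕ} {hn : 3 ≤ n} {u v : Mon n}
    (h : Quot.mk (Step hn) u = Quot.mk (Step hn) v) : xsum u = xsum v :=
  congrArg (Quot.lift xsum fun _ _ h => h.xsum_eq) h

/-! ### Counting classes of monomials -/

/-- A monomial is full if at every vertex `i` of the cycle it is divisible by `x_i` or `y_i`. -/
def Full {n : ℕ} (u : Mon n) : Prop := ∀ i, 0 < tot u i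

/-- In a full monomial that is reduced along the path `0, 1, …, n - 1`, no `x_j` can occur to the
right of an occurring `y_i`: the vertex `i + 1` loses its `x`, hence carries a `y`, and so on. -/
theorem Full.inl_eq_zero {n : ℕ} {hn : 3 ≤ n} {u : Mon n} (hf : Full u)
    (hu : ∀ i, cs hn i ≠ ⟨0, by omega⟩ → u (Sum.inr i) = 0 ∨ u (Sum.inl (cs hn i)) = 0)
    (i : Fin n) (hi : 0 < u (Sum.inr i)) : ∀ j, i < j → u (Sum.inl j) = 0 := by
  rintro ⟨j, hj⟩ hij
  induction j with
  | zero => simp [Fin.lt_def] at hij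
  | succ j ih =>
    have hcs : cs hn ⟨j, by omega⟩ = ⟨j + 1, hj⟩ := by simp [cs, hj]
    have h := hu ⟨j, by omega⟩ (by simp [hcs])
    rw [hcs] at h
    refine h.resolve_left ?_
    rcases eq_or_ne i ⟨j, by omega⟩ with heq | hne
    · rw [← heq]
      exact hi.ne'
    · have hlt : i < ⟨j, by omega⟩ := by
        simp only [Fin.lt_def, ne_eq, Fin.ext_iff] at hij hne ⊢
        omega
      have h1 := ih (by omega) hlt
      have h2 := hf ⟨j, by omega⟩
      simp only [tot] at h2
      omega

/-- The comparison behind uniqueness of path-reduced full monomials: if the `x`-exponents of `v`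
exceeded those of `u` at one vertex `i`, then `u` has no `x` to the right of `i` and `v` no `y` to
the left of `i`, so the `x`-degree of `v` would be strictly larger. -/
theorem le_of_reduced {n : ℕ} {hn : 3 ≤ n} {u v : Mon n} (hf : Full u)
    (hu : ∀ i, cs hn i ≠ ⟨0, by omega⟩ → u (Sum.inr i) = 0 ∨ u (Sum.inl (cs hn i)) = 0)
    (hv : ∀ i, cs hn i ≠ ⟨0, by omega⟩ → v (Sum.inr i) = 0 ∨ v (Sum.inl (cs hn i)) = 0)
    (ht : tot u = tot v) (hx : xsum u = xsum v) (i : Fin n) :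
    v (Sum.inl i) ≤ u (Sum.inl i) := by
  by_contra! hlt
  have hfv : Full v := fun i => by rw [← ht]; exact hf i
  have hT : ∀ j, u (Sum.inl j) + u (Sum.inr j) = v (Sum.inl j) + v (Sum.inr j) :=
    fun j => congrFun ht j
  refine absurd hx (ne_of_lt ?_)
  refine Finset.sum_lt_sum (fun j _ => ?_) ⟨i, Finset.mem_univ _, hlt⟩
  rcases lt_trichotomy i j with hij | rfl | hij
  · have := hf.inl_eq_zero hu i (by have := hT i; omega) j hij
    omega
  · exact hlt.le
  · have : v (Sum.inr j) = 0 := by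
      by_contra hne
      have := hfv.inl_eq_zero hv j (Nat.pos_of_ne_zero hne) i hij
      omega
    have := hT j
    omega

/-- On full monomials the multidegree and the `x`-degree form a complete set of invariants. -/
theorem mk_eq_of_full {n : ℕ} {hn : 3 ≤ n} {u v : Mon n} (hf : Full u)
    (ht : tot u = tot v) (hx : xsum u = xsum v) :
    Quot.mk (Step hn) u = Quot.mk (Step hn) v := by
  obtain ⟨u', hu, hu'⟩ := exists_reduced hn ⟨0, by omega⟩ u
  obtain ⟨v', hv, hv'⟩ := exists_reduced hn ⟨0, by omega⟩ v
  have ht' : tot u' = tot v' := by rw [← tot_eq_of_mk_eq hu, ← tot_eq_of_mk_eq hv, ht]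
  have hx' : xsum u' = xsum v' := by rw [← xsum_eq_of_mk_eq hu, ← xsum_eq_of_mk_eq hv, hx]
  have hfu : Full u' := fun i => by rw [← tot_eq_of_mk_eq hu]; exact hf i
  have hfv : Full v' := fun i => by rw [← ht']; exact hfu i
  have hinl : ∀ i, u' (Sum.inl i) = v' (Sum.inl i) := fun i =>
    le_antisymm (le_of_reduced hfv hv' hu' ht'.symm hx'.symm i)
      (le_of_reduced hfu hu' hv' ht' hx' i)
  have huv : u' = v' := by
    ext (i | i)
    · exact hinl i
    · have h1 := congrFun ht' i
      have h2 := hinl i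
      simp only [tot] at h1
      omega
  rw [hu, hv, huv]

/-- The monomial with `x`-exponents `x` and `y`-exponents `y`. -/
def mkMon {n : ℕ} (x y : Fin n → ℕ) : Mon n := Finsupp.equivFunOnFinite.symm (Sum.elim x y)

@[simp] theorem mkMon_inl {n : ℕ} (x y : Fin n → ℕ) (i : Fin n) :
    mkMon x y (Sum.inl i) = x i := rfl

@[simp] theorem mkMon_inr {n : ℕ} (x y : Fin n → ℕ) (i : Fin n) :
    mkMon x y (Sum.inr i) = y i := rfl

theorem exists_le_sum_eq {n : ℕ} (a : Fin n → ℕ) (s : ℕ) (hs : s ≤ ∑ i, a i) :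
    ∃ b : Fin n → ℕ, (∀ i, b i ≤ a i) ∧ ∑ i, b i = s := by
  induction s with
  | zero => exact ⟨0, by simp, by simp⟩
  | succ s ih =>
    obtain ⟨b, hb, hsum⟩ := ih (by omega)
    obtain ⟨i, -, hi⟩ := Finset.exists_lt_of_sum_lt (show ∑ i, b i < ∑ i, a i by omega)
    refine ⟨fun j => b j + if j = i then 1 else 0, fun j => ?_, ?_⟩
    · have := hb j
      dsimp only
      split_ifs with h
      · subst h; omega
      · omega
    · simp [Finset.sum_add_distrib, hsum]

theorem finite_degree_and {n : ℕ} (m : ℕ) (P : Mon n → Prop) :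
    {u : Mon n | u.degree = m ∧ P u}.Finite :=
  (Finsupp.finite_of_degree_eq m).subset fun _ h => h.1

/-- The multidegrees of full monomials of degree `m`: compositions of `m` into `n` positive parts. -/
def posSet (n m : ℕ) : Set (Fin n → ℕ) := {a | (∀ i, 0 < a i) ∧ ∑ i, a i = m}

/-- Full classes are the pairs of a positive multidegree of sum `m` and an `x`-degree in `[0, m]`. -/
theorem ncard_full_classes {n : ℕ} (hn : 3 ≤ n) (m : ℕ) :
    (Quot.mk (Step hn) '' {u | u.degree = m ∧ Full u}).ncard =
      (posSet n m).ncard * (m + 1) := by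
  let g : Quot (Step hn) → (Fin n → ℕ) × ℕ :=
    fun q => (Quot.lift tot (fun _ _ h => h.tot_eq) q, Quot.lift xsum (fun _ _ h => h.xsum_eq) q)
  have hinj : Set.InjOn g (Quot.mk (Step hn) '' {u | u.degree = m ∧ Full u}) := by
    rintro _ ⟨u, hu, rfl⟩ _ ⟨v, hv, rfl⟩ h
    exact mk_eq_of_full hu.2 (congrArg Prod.fst h) (congrArg Prod.snd h)
  have himg : g '' (Quot.mk (Step hn) '' {u | u.degree = m ∧ Full u}) =
      posSet n m ×ˢ Set.Iic m := by
    rw [Set.image_image]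
    ext ⟨a, s⟩
    constructor
    · rintro ⟨u, ⟨hd, hf⟩, h⟩
      obtain ⟨rfl, rfl⟩ := Prod.mk.inj h
      rw [degree_eq_sum_tot] at hd
      refine ⟨⟨hf, hd⟩, ?_⟩
      rw [← hd]
      change ∑ i, u (Sum.inl i) ≤ ∑ i, tot u i
      exact Finset.sum_le_sum (f := fun i => u (Sum.inl i)) (g := tot u)
        fun i _ => Nat.le_add_right _ _
    · rintro ⟨⟨ha, hm⟩, hs⟩
      obtain ⟨b, hb, hsum⟩ := exists_le_sum_eq a s (by rw [hm]; exact hs)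
      have htot : tot (mkMon b (a - b)) = a := by
        ext i
        have := hb i
        simp [tot]
        omega
      refine ⟨mkMon b (a - b), ⟨?_, ?_⟩, Prod.ext htot ?_⟩
      · rw [degree_eq_sum_tot, htot]; exact hm
      · intro i; rw [htot]; exact ha i
      · exact hsum
  rw [← hinj.ncard_image, himg, Set.ncard_prod]
  congr 1
  rw [← Finset.coe_Iic, Set.ncard_coe_finset, Nat.card_Iic]

/-- Every class of a non-full monomial contains exactly one normal form. -/
theorem ncard_nonfull_classes {n : ℕ} (hn : 3 ≤ n) (m : ℕ) :
    (Quot.mk (Step hn) '' {u | u.degree = m ∧ ¬ Full u}).ncard =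
      {u : Mon n | u.degree = m ∧ (IsNF hn u ∧ ¬ Full u)}.ncard := by
  have himg : Quot.mk (Step hn) '' {u | u.degree = m ∧ ¬ Full u} =
      Quot.mk (Step hn) '' {u | u.degree = m ∧ (IsNF hn u ∧ ¬ Full u)} := by
    apply Set.Subset.antisymm
    · rintro _ ⟨u, ⟨hd, hf⟩, rfl⟩
      have hz := hf
      simp only [Full, not_forall, not_lt, nonpos_iff_eq_zero] at hz
      obtain ⟨z, hz⟩ := hz
      obtain ⟨v, hv, hred⟩ := exists_reduced hn z u
      have ht := tot_eq_of_mk_eq hv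
      refine ⟨v, ⟨?_, fun i => ?_, ?_⟩, hv.symm⟩
      · rw [degree_eq_sum_tot, ← ht, ← degree_eq_sum_tot]; exact hd
      · by_cases hi : cs hn i = z
        -- the edge entering `z` imposes nothing, since neither variable at `z` occurs
        · right
          rw [ht, ← hi] at hz
          simp only [tot] at hz
          omega
        · exact hred i hi
      · simpa only [Full, ht] using hf
    · exact Set.image_mono fun u hu => ⟨hu.1, hu.2.2⟩
  rw [himg, Set.InjOn.ncard_image]
  intro u hu v hv h
  exact hu.2.1.eq_of_mk_eq hv.2.1 h

/-- Going once around the cycle, a full normal form involves only `y`'s or only `x`'s. -/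
theorem Full.isNF_iff {n : ℕ} {hn : 3 ≤ n} {u : Mon n} (hf : Full u) :
    IsNF hn u ↔ (∀ i, u (Sum.inl i) = 0) ∨ (∀ i, u (Sum.inr i) = 0) := by
  refine ⟨fun hu => ?_, ?_⟩
  · by_cases hy : ∀ i, u (Sum.inr i) = 0
    · exact Or.inr hy
    left
    have hu' : ∀ i, cs hn i ≠ ⟨0, by omega⟩ → u (Sum.inr i) = 0 ∨ u (Sum.inl (cs hn i)) = 0 :=
      fun i _ => hu i
    push Not at hy
    obtain ⟨i, hi⟩ := hy
    have hlast : u (Sum.inr ⟨n - 1, by omega⟩) ≠ 0 := by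
      rcases eq_or_ne i ⟨n - 1, by omega⟩ with rfl | hne
      · exact hi
      · have h1 := hf.inl_eq_zero hu' i (Nat.pos_of_ne_zero hi) ⟨n - 1, by omega⟩ (by
          have := i.2
          simp only [Fin.lt_def, ne_eq, Fin.ext_iff] at hne ⊢
          omega)
        have h2 := hf ⟨n - 1, by omega⟩
        simp only [tot] at h2
        omega
    have h0 : u (Sum.inl ⟨0, by omega⟩) = 0 := by
      have h := (hu ⟨n - 1, by omega⟩).resolve_left hlast
      have hcs : cs hn ⟨n - 1, by omega⟩ = ⟨0, by omega⟩ := by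
        simp only [cs, Fin.mk.injEq]
        split_ifs <;> omega
      rwa [hcs] at h
    intro j
    rcases eq_or_ne j ⟨0, by omega⟩ with rfl | hne
    · exact h0
    · refine hf.inl_eq_zero hu' ⟨0, by omega⟩ ?_ j ?_
      · have h2 := hf ⟨0, by omega⟩
        simp only [tot] at h2
        omega
      · simp only [Fin.lt_def, ne_eq, Fin.ext_iff] at hne ⊢
        omega
  · rintro (h | h) i
    · exact Or.inr (h _)
    · exact Or.inl (h _)

theorem ncard_full_NF {n : ℕ} (hn : 3 ≤ n) (m : ℕ) :
    {u : Mon n | u.degree = m ∧ (IsNF hn u ∧ Full u)}.ncard = 2 * (posSet n m).ncard := by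
  have hset : {u : Mon n | u.degree = m ∧ (IsNF hn u ∧ Full u)} =
      (fun a => mkMon 0 a) '' posSet n m ∪ (fun a => mkMon a 0) '' posSet n m := by
    ext u
    constructor
    · rintro ⟨hd, hnf, hf⟩
      rw [degree_eq_sum_tot] at hd
      have hA : tot u ∈ posSet n m := ⟨hf, hd⟩
      rcases hf.isNF_iff.1 hnf with h | h
      · refine Or.inl ⟨tot u, hA, ?_⟩
        ext (i | i) <;> simp [tot, h i]
      · refine Or.inr ⟨tot u, hA, ?_⟩
        ext (i | i) <;> simp [tot, h i]
    · rintro (⟨a, ⟨ha, hm⟩, rfl⟩ | ⟨a, ⟨ha, hm⟩, rfl⟩)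
      · have ht : tot (mkMon 0 a) = a := by ext i; simp [tot]
        have hf : Full (mkMon 0 a) := fun i => by rw [ht]; exact ha i
        exact ⟨by rw [degree_eq_sum_tot, ht]; exact hm, hf.isNF_iff.2 (Or.inl fun _ => rfl), hf⟩
      · have ht : tot (mkMon a 0) = a := by ext i; simp [tot]
        have hf : Full (mkMon a 0) := fun i => by rw [ht]; exact ha i
        exact ⟨by rw [degree_eq_sum_tot, ht]; exact hm, hf.isNF_iff.2 (Or.inr fun _ => rfl), hf⟩
  have hfin := finite_degree_and m (fun u : Mon n => IsNF hn u ∧ Full u)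
  rw [hset] at hfin ⊢
  rw [Set.ncard_union_eq _ (hfin.subset Set.subset_union_left)
    (hfin.subset Set.subset_union_right), Set.ncard_image_of_injective,
    Set.ncard_image_of_injective, two_mul]
  · intro a b h
    ext i
    exact DFunLike.congr_fun h (Sum.inl i)
  · intro a b h
    ext i
    exact DFunLike.congr_fun h (Sum.inr i)
  · rw [Set.disjoint_left]
    rintro _ ⟨a, ha, rfl⟩ ⟨b, hb, h⟩
    have h0 : b ⟨0, by omega⟩ = 0 := by
      simpa using DFunLike.congr_fun h (Sum.inl ⟨0, by omega⟩)
    exact (hb.1 ⟨0, by omega⟩).ne' h0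

/-- Normal forms are the monomials avoiding all products `y_i x_{i+1}`. These `n` products involve
pairwise disjoint pairs of variables, so a normal form is a free choice, for each `i`, of a power
of `y_i` or of `x_{i+1}`. -/
theorem ncard_NF {n : ℕ} (hn : 3 ≤ n) (m : ℕ) :
    {u : Mon n | u.degree = m ∧ IsNF hn u}.ncard =
      {f : Fin n → ℕ × ℕ | (∀ i, (f i).1 = 0 ∨ (f i).2 = 0) ∧
        ∑ i, ((f i).1 + (f i).2) = m}.ncard := by
  let e : Fin n ≃ Fin n := Equiv.ofBijective (cs hn) (cs_bijective hn)
  have he : ∀ i, e i = cs hn i := fun _ => rfl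
  let g : Mon n → Fin n → ℕ × ℕ := fun u i => (u (Sum.inr i), u (Sum.inl (e i)))
  have hg : Function.Injective g := by
    intro u v h
    ext (i | i)
    · simpa [g] using congrArg Prod.snd (congrFun h (e.symm i))
    · exact congrArg Prod.fst (congrFun h i)
  have hsum : ∀ u : Mon n, ∑ i, ((g u i).1 + (g u i).2) = u.degree := by
    intro u
    rw [degree_eq_sum_tot]
    simp only [g, tot, Finset.sum_add_distrib]
    rw [Equiv.sum_comp e (fun i => u (Sum.inl i)), add_comm]
  rw [← Set.ncard_image_of_injective _ hg]
  congr 1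
  ext f
  constructor
  · rintro ⟨u, ⟨hd, hu⟩, rfl⟩
    exact ⟨hu, by rw [hsum]; exact hd⟩
  · rintro ⟨hf, hm⟩
    have hgf : g (mkMon (fun j => (f (e.symm j)).2) (fun i => (f i).1)) = f := by
      ext i <;> simp [g]
    refine ⟨_, ⟨?_, ?_⟩, hgf⟩
    · rw [← hsum, hgf]; exact hm
    · have h : ∀ i, (g (mkMon (fun j => (f (e.symm j)).2) (fun i => (f i).1)) i).1 = 0 ∨
          (g (mkMon (fun j => (f (e.symm j)).2) (fun i => (f i).1)) i).2 = 0 := by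
        rw [hgf]; exact hf
      exact h

/-- Counting classes through normal forms: the full normal forms, two for each positive multidegree,
are replaced by the `m + 1` full classes of that multidegree. -/
theorem ncard_classes {n : ℕ} (hn : 3 ≤ n) (m : ℕ) :
    (Quot.mk (Step hn) '' {u : Mon n | u.degree = m}).ncard + 2 * (posSet n m).ncard =
      {f : Fin n → ℕ × ℕ | (∀ i, (f i).1 = 0 ∨ (f i).2 = 0) ∧
        ∑ i, ((f i).1 + (f i).2) = m}.ncard + (posSet n m).ncard * (m + 1) := by
  have hsplit : {u : Mon n | u.degree = m} =
      {u | u.degree = m ∧ ¬ Full u} ∪ {u | u.degree = m ∧ Full u} := by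
    ext u
    simp only [Set.mem_union, Set.mem_ofPred_eq]
    tauto
  have hsplit' : {u : Mon n | u.degree = m ∧ IsNF hn u} =
      {u | u.degree = m ∧ (IsNF hn u ∧ ¬ Full u)} ∪
        {u | u.degree = m ∧ (IsNF hn u ∧ Full u)} := by
    ext u
    simp only [Set.mem_union, Set.mem_ofPred_eq]
    tauto
  have hdisj : Disjoint (Quot.mk (Step hn) '' {u | u.degree = m ∧ ¬ Full u})
      (Quot.mk (Step hn) '' {u | u.degree = m ∧ Full u}) := by
    rw [Set.disjoint_left]
    rintro _ ⟨u, hu, rfl⟩ ⟨v, hv, h⟩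
    apply hu.2
    intro i
    rw [← tot_eq_of_mk_eq h]
    exact hv.2 i
  have hdisj' : Disjoint {u : Mon n | u.degree = m ∧ (IsNF hn u ∧ ¬ Full u)}
      {u | u.degree = m ∧ (IsNF hn u ∧ Full u)} := by
    rw [Set.disjoint_left]
    exact fun u hu hv => hu.2.2 hv.2.2
  rw [← ncard_NF hn, hsplit', Set.ncard_union_eq hdisj' (finite_degree_and _ _)
    (finite_degree_and _ _), ncard_full_NF, hsplit, Set.image_union,
    Set.ncard_union_eq hdisj ((finite_degree_and _ _).image _) ((finite_degree_and _ _).image _),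
    ncard_nonfull_classes, ncard_full_classes]
  ring

/-! ### The Hilbert series -/

theorem hseries_eq (K : Type) [Field K] (n : ℕ) (hn : 3 ≤ n) :
    hseries K (bei K (cycleG n)) * (1 - t) ^ (n + 1) =
      (1 + t) ^ (n - 1) - t ^ 2 * (1 + t) ^ (n - 1) +
        ((n : PowerSeries ℤ) - 1) * t ^ n + t ^ (n + 1) := by
  obtain ⟨G, hG, hGc⟩ := exists_pairSeries n
  obtain ⟨F, hF, hFc⟩ := exists_posSeries n
  have hH : hseries K (bei K (cycleG n)) = G + (t * PowerSeries.derivative ℤ F - F) := by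
    ext m
    have hc := congrArg (Nat.cast : ℕ → ℤ) (ncard_classes hn m)
    rw [Nat.cast_add, Nat.cast_add, Nat.cast_mul, Nat.cast_mul, Nat.cast_add] at hc
    simp only [Nat.cast_ofNat, Nat.cast_one] at hc
    have hder : PowerSeries.coeff m (t * PowerSeries.derivative ℤ F) =
        m * ((posSet n m).ncard : ℤ) := by
      rcases m with _ | m
      · simp [t]
      · rw [t, mul_comm PowerSeries.X, PowerSeries.coeff_succ_mul_X,
          PowerSeries.coeff_derivative, hFc]
        simp only [posSet]
        push_cast
        ring
    rw [hseries, PowerSeries.coeff_mk, map_add, map_sub, hder, hGc, hFc,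
      finrank_image_eq_ncard K (Step hn) _ (step_mem K hn) (toQuot_bei K hn)]
    change _ = _ + ((m : ℤ) * _ - ((posSet n m).ncard : ℤ))
    linear_combination hc
  obtain ⟨k, rfl⟩ : ∃ k, n = k + 1 := ⟨n - 1, by omega⟩
  have hid := posSeries_identity (k + 1) F hF
  rw [hH, add_mul, hid, Nat.add_sub_cancel]
  linear_combination (1 - t) * hG

/-- Let `C` be the cycle of length `n ≥ 3` on `[n]` and `I_C` its
binomial edge ideal.  Then
`H(S/I_C, t) = ((1+t)^{n−1} − t²(1+t)^{n−1} + (n−1)tⁿ + t^{n+1}) / (1−t)^{n+1}`.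
In particular, the multiplicity of `S/I_C` equals `n`: writing
`H(S/I_C, t) = h(t)/(1−t)^{n+1}` with `h` a polynomial (and `n + 1 = dim S/I_C`),
one has `h(1) = n`. -/
theorem statement18 (K : Type) [Field K] (n : ℕ) (hn : 3 ≤ n) :
    hseries K (bei K (cycleG n)) * (1 - t) ^ (n + 1) =
      (1 + t) ^ (n - 1) - t ^ 2 * (1 + t) ^ (n - 1) +
        ((n : PowerSeries ℤ) - 1) * t ^ n + t ^ (n + 1) ∧
    ∃ h : Polynomial ℤ,
      (h : PowerSeries ℤ) = hseries K (bei K (cycleG n)) * (1 - t) ^ (n + 1) ∧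
      h.eval 1 = (n : ℤ) := by
  refine ⟨hseries_eq K n hn, (1 + Polynomial.X) ^ (n - 1) -
    Polynomial.X ^ 2 * (1 + Polynomial.X) ^ (n - 1) +
    ((n : Polynomial ℤ) - 1) * Polynomial.X ^ n + Polynomial.X ^ (n + 1), ?_, ?_⟩
  · rw [hseries_eq K n hn]
    simp [t]
    exact map_natCast (Polynomial.coeToPowerSeries.ringHom (R := ℤ)) n
  · simp

end BEIPaper
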